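/- Let g: ℕ → ℕ be nondecreasing, unbounded, with g(n)/n → 0. Define the bounded density shift X over {0,1} as the set of all x ∈ {0,1}^ℤ such that every subword of x of length n contains at most g(n) occurrences of the symbol 1. Then X is a nonempty subshift that is irreducible and has left almost specification with mistake function g(n). -/

import Mathlib

open Real Filter MeasureTheory

/-- The left shift map on bi-infinite sequences. -/
def shiftMap {A : Type*} (x : ℤ → A) : ℤ → A := fun i => x (i + 1)

/-- The word of length `n` read from `x` starting at position `i`. -/
def wordAt {A : Type*} (x : ℤ → A) (i : ℤ) (n : ℕ) : List A :=
  List.ofFn (fun k : Fin n => x (i + (k : ℕ)))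

/-- A word `w` belongs to the language of a set `S` of bi-infinite sequences if it
occurs somewhere in some point of `S`. -/
def InLangS {A : Type*} (S : Set (ℤ → A)) (w : List A) : Prop :=
  ∃ x ∈ S, ∃ i : ℤ, wordAt x i w.length = w

/-- Hamming distance between two words of the same length: the number of
positions at which they differ. -/
def listHamming {A : Type*} [DecidableEq A] (v w : List A) : ℕ :=
  (List.zipWith (fun a b => if a = b then 0 else 1) v w).sum

/-- A subshift: a closed, shift-invariant set of bi-infinite sequences over a
finite (discrete) alphabet. -/
structure Subshift (A : Type*) [TopologicalSpace A] where
  carrier : Set (ℤ → A)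
  isClosed : IsClosed carrier
  invariant : ∀ x ∈ carrier, shiftMap x ∈ carrier

/-- Topological entropy of (the language of) `S`, as the infimum of
`(1/n) log |L_n(S)|` (equal to the limit by subadditivity). -/
noncomputable def langEntropy {A : Type*} (S : Set (ℤ → A)) : ℝ :=
  ⨅ n : ℕ+, Real.log ({w : List A | w.length = (n : ℕ) ∧ InLangS S w}.ncard) / (n : ℝ)

/-- The bounded density shift over `{0,1}` (here `Bool`, with `true` playing the
role of the symbol 1): all bi-infinite sequences each of whose length-`n`
subwords contains at most `g n` ones. -/
def bdsCarrier (g : ℕ → ℕ) : Set (ℤ → Bool) :=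
  {x : ℤ → Bool | ∀ (i : ℤ) (n : ℕ), (wordAt x i n).count true ≤ g n}

/-!
The bounded density shift `X` is hereditary: changing ones into zeros never leaves it. Hence a word
`w` lies in the language of `X` exactly when the point `0^∞ w 0^∞` lies in `X`. Left almost
specification follows by erasing `w¹` altogether, which changes at most `g |w¹|` symbols. For
irreducibility, put `0^N` between `u` and `v`: a window of length less than `N` meets only one of
the two words, and a longer one sees at most `|u| + |v| ≤ g n` ones as soon as `N` is large.
-/

section Words

variable {A : Type*}

/-- The point `x` moved `t` places to the left, that is, the `t`-th iterate of `shiftMap`. Negative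
`t` is allowed and moves to the right. -/
def shiftBy (t : ℤ) (x : ℤ → A) : ℤ → A := fun j => x (j + t)

lemma wordAt_shiftBy (t : ℤ) (x : ℤ → A) (i : ℤ) (n : ℕ) :
    wordAt (shiftBy t x) i n = wordAt x (i + t) n := by
  simp only [wordAt, shiftBy, add_right_comm]

lemma wordAt_length_eq_iff {x : ℤ → A} {i : ℤ} {w : List A} :
    wordAt x i w.length = w ↔ ∀ (k : ℕ) (hk : k < w.length), x (i + k) = w[k] := by
  simp [List.ext_getElem_iff, wordAt]

lemma wordAt_succ (x : ℤ → A) (i : ℤ) (n : ℕ) :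
    wordAt x i (n + 1) = wordAt x i n ++ [x (i + n)] := by
  rw [wordAt, List.ofFn_succ_last]
  rfl

variable [DecidableEq A]

lemma count_wordAt (x : ℤ → A) (i : ℤ) (n : ℕ) (a : A) :
    (wordAt x i n).count a = ((Finset.Ico i (i + n)).filter (x · = a)).card := by
  induction n with
  | zero => simp [wordAt]
  | succ n ih =>
    have hIco : Finset.Ico i (i + (n + 1 : ℕ)) = insert (i + n : ℤ) (Finset.Ico i (i + n)) := by
      ext j
      simp only [Finset.mem_insert, Finset.mem_Ico]
      omega
    rw [wordAt_succ, List.count_append, ih, hIco, Finset.filter_insert]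
    by_cases hx : x (i + n) = a <;> simp [hx]

lemma count_wordAt_le_count_wordAt {x y : ℤ → A} {i : ℤ} {n : ℕ} {a : A}
    (h : ∀ j ∈ Finset.Ico i (i + n), x j = a → y j = a) :
    (wordAt x i n).count a ≤ (wordAt y i n).count a := by
  rw [count_wordAt, count_wordAt]
  exact Finset.card_le_card (Finset.monotone_filter_right _ h)

lemma listHamming_replicate (a : A) (w : List A) :
    listHamming (List.replicate w.length a) w = w.countP (a ≠ ·) := by
  induction w with
  | nil => rfl
  | cons b w ih =>
    simp only [listHamming] at ih
    rw [List.countP_cons, ← ih]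
    by_cases h : a = b <;> simp [listHamming, List.replicate_succ, h, add_comm]

end Words

lemma count_true_wordAt_sup_le (x y : ℤ → Bool) (i : ℤ) (n : ℕ) :
    (wordAt (x ⊔ y) i n).count true ≤ (wordAt x i n).count true + (wordAt y i n).count true := by
  have hfilter : (Finset.Ico i (i + n)).filter ((x ⊔ y) · = true) =
      (Finset.Ico i (i + n)).filter (x · = true) ∪ (Finset.Ico i (i + n)).filter (y · = true) := by
    rw [← Finset.filter_or]
    simp
  simp only [count_wordAt, hfilter]
  exact Finset.card_union_le _ _

/-- The point `0^∞ w 0^∞`, in which the word `w` occupies the positions `0, …, |w| - 1`. -/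
def zeroExtension (w : List Bool) : ℤ → Bool
  | (k : ℕ) => w.getD k false
  | Int.negSucc _ => false

lemma zeroExtension_natCast (w : List Bool) (k : ℕ) : zeroExtension w k = w.getD k false := rfl

lemma zeroExtension_of_neg (w : List Bool) {j : ℤ} (hj : j < 0) : zeroExtension w j = false := by
  obtain ⟨k, rfl⟩ := Int.eq_negSucc_of_lt_zero hj
  rfl

lemma zeroExtension_of_length_le {w : List Bool} {j : ℤ} (hj : w.length ≤ j) :
    zeroExtension w j = false := by
  lift j to ℕ using (Int.natCast_nonneg _).trans hj
  exact List.getD_eq_default _ _ (mod_cast hj)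

lemma wordAt_zeroExtension (w : List Bool) : wordAt (zeroExtension w) 0 w.length = w := by
  refine wordAt_length_eq_iff.2 fun k hk => ?_
  rw [zero_add, zeroExtension_natCast, List.getD_eq_getElem _ _ hk]

lemma zeroExtension_le_shiftBy {x : ℤ → Bool} {i : ℤ} {w : List Bool}
    (h : wordAt x i w.length = w) : zeroExtension w ≤ shiftBy i x := by
  intro j
  rcases lt_or_ge j 0 with hneg | hnonneg
  · simp [zeroExtension_of_neg w hneg]
  rcases lt_or_ge j w.length with hlt | hge
  · lift j to ℕ using hnonneg
    have hj : j < w.length := mod_cast hlt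
    rw [zeroExtension_natCast, List.getD_eq_getElem _ _ hj, ← wordAt_length_eq_iff.1 h j hj,
      shiftBy, add_comm]
  · simp [zeroExtension_of_length_le hge]

lemma zeroExtension_append (u v : List Bool) :
    zeroExtension (u ++ v) = zeroExtension u ⊔ shiftBy (-u.length) (zeroExtension v) := by
  funext j
  simp only [Pi.sup_apply, shiftBy]
  rcases lt_or_ge j u.length with hlt | hge
  · rw [zeroExtension_of_neg v (by omega)]
    rcases lt_or_ge j 0 with hneg | hnonneg
    · simp [zeroExtension_of_neg _ hneg]
    · lift j to ℕ using hnonneg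
      rw [zeroExtension_natCast, zeroExtension_natCast,
        List.getD_append _ _ _ _ (Nat.cast_lt.1 hlt)]
      exact (sup_bot_eq _).symm
  · rw [zeroExtension_of_length_le hge]
    obtain ⟨k, rfl⟩ := Int.le.dest hge
    rw [← Nat.cast_add, zeroExtension_natCast, List.getD_append_right _ _ _ _ (by omega)]
    simp [zeroExtension_natCast]

lemma zeroExtension_replicate_false (n : ℕ) : zeroExtension (List.replicate n false) = ⊥ := by
  funext j
  rcases lt_or_ge j 0 with hneg | hnonneg
  · exact zeroExtension_of_neg _ hneg
  · lift j to ℕ using hnonneg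
    simp [zeroExtension_natCast]

lemma zeroExtension_replicate_false_append (n : ℕ) (w : List Bool) :
    zeroExtension (List.replicate n false ++ w) = shiftBy (-n) (zeroExtension w) := by
  simp [zeroExtension_append, zeroExtension_replicate_false]

lemma count_true_wordAt_zeroExtension_le (w : List Bool) (i : ℤ) (n : ℕ) :
    (wordAt (zeroExtension w) i n).count true ≤ w.length := by
  have hsupport : (Finset.Ico i (i + n)).filter (zeroExtension w · = true) ⊆
      Finset.Ico 0 (w.length : ℤ) := by
    intro j hj
    have hone : zeroExtension w j = true := (Finset.mem_filter.1 hj).2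
    rw [Finset.mem_Ico]
    by_contra! hout
    rcases lt_or_ge j 0 with hneg | hnonneg
    · simp [zeroExtension_of_neg w hneg] at hone
    · simp [zeroExtension_of_length_le (hout hnonneg)] at hone
  simpa [count_wordAt] using Finset.card_le_card hsupport

lemma inLangS_iff_zeroExtension_mem {S : Set (ℤ → Bool)} (hlower : IsLowerSet S)
    (hshift : ∀ t, ∀ x ∈ S, shiftBy t x ∈ S) {w : List Bool} :
    InLangS S w ↔ zeroExtension w ∈ S := by
  constructor
  · rintro ⟨x, hx, i, hw⟩
    exact hlower (zeroExtension_le_shiftBy hw) (hshift i x hx)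
  · exact fun h => ⟨_, h, 0, wordAt_zeroExtension w⟩

section BoundedDensity

variable (g : ℕ → ℕ)

lemma bot_mem_bdsCarrier : ⊥ ∈ bdsCarrier g := by
  intro i n
  simp [count_wordAt]

lemma isLowerSet_bdsCarrier : IsLowerSet (bdsCarrier g) := fun _ _ hyx hx i n =>
  (count_wordAt_le_count_wordAt fun j _ => Bool.le_iff_imp.1 (hyx j)).trans (hx i n)

lemma isClosed_bdsCarrier : IsClosed (bdsCarrier g) := by
  simp only [bdsCarrier, Set.ofPred_forall]
  refine isClosed_iInter fun i => isClosed_iInter fun n => ?_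
  have hwindow : Continuous fun (x : ℤ → Bool) (k : Fin n) => x (i + (k : ℕ)) := by fun_prop
  exact (isClosed_discrete {f : Fin n → Bool | (List.ofFn f).count true ≤ g n}).preimage hwindow

variable {g}

lemma shiftBy_mem_bdsCarrier (t : ℤ) (x : ℤ → Bool) (hx : x ∈ bdsCarrier g) :
    shiftBy t x ∈ bdsCarrier g := fun i n => by
  rw [wordAt_shiftBy]
  exact hx (i + t) n

lemma inLangS_bdsCarrier_iff {w : List Bool} :
    InLangS (bdsCarrier g) w ↔ zeroExtension w ∈ bdsCarrier g :=
  inLangS_iff_zeroExtension_mem (isLowerSet_bdsCarrier g) shiftBy_mem_bdsCarrier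

lemma count_true_le_of_inLangS_bdsCarrier {w : List Bool} (hw : InLangS (bdsCarrier g) w) :
    w.count true ≤ g w.length := by
  obtain ⟨x, hx, i, hxw⟩ := hw
  simpa only [hxw] using hx i w.length

lemma sup_mem_bdsCarrier {x y : ℤ → Bool} (hx : x ∈ bdsCarrier g) (hy : y ∈ bdsCarrier g)
    {a : ℤ} {N p q : ℕ} (hxa : ∀ j, a ≤ j → x j = false) (hya : ∀ j, j < a + N → y j = false)
    (hp : ∀ i n, (wordAt x i n).count true ≤ p) (hq : ∀ i n, (wordAt y i n).count true ≤ q)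
    (hpq : ∀ n, N ≤ n → p + q ≤ g n) : x ⊔ y ∈ bdsCarrier g := by
  intro i n
  rcases le_or_gt N n with hlong | hshort
  · calc (wordAt (x ⊔ y) i n).count true
        ≤ (wordAt x i n).count true + (wordAt y i n).count true := count_true_wordAt_sup_le x y i n
      _ ≤ p + q := add_le_add (hp i n) (hq i n)
      _ ≤ g n := hpq n hlong
  rcases lt_or_ge i a with hleft | hright
  · refine (count_wordAt_le_count_wordAt fun j hj hone => ?_).trans (hx i n)
    have hyj : y j = false := hya j (by rw [Finset.mem_Ico] at hj; omega)
    simpa [hyj] using hone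
  · refine (count_wordAt_le_count_wordAt fun j hj hone => ?_).trans (hy i n)
    have hxj : x j = false := hxa j (hright.trans (Finset.mem_Ico.1 hj).1)
    simpa [hxj] using hone

lemma exists_inLangS_bdsCarrier_append (hg : Tendsto g atTop atTop) {u v : List Bool}
    (hu : InLangS (bdsCarrier g) u) (hv : InLangS (bdsCarrier g) v) :
    ∃ z : List Bool, InLangS (bdsCarrier g) (u ++ z ++ v) := by
  obtain ⟨N, hN⟩ := eventually_atTop.1 (hg.eventually_ge_atTop (u.length + v.length))
  refine ⟨List.replicate N false, ?_⟩
  rw [inLangS_bdsCarrier_iff] at hu hv ⊢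
  rw [List.append_assoc, zeroExtension_append, zeroExtension_replicate_false_append]
  refine sup_mem_bdsCarrier hu
    (shiftBy_mem_bdsCarrier _ _ (shiftBy_mem_bdsCarrier _ _ hv))
    (fun j => zeroExtension_of_length_le) (fun j hj => zeroExtension_of_neg v (by omega))
    (count_true_wordAt_zeroExtension_le u) (fun i n => ?_) hN
  simp only [wordAt_shiftBy]
  exact count_true_wordAt_zeroExtension_le v _ n

lemma inLangS_bdsCarrier_replicate_false (n : ℕ) :
    InLangS (bdsCarrier g) (List.replicate n false) := by
  rw [inLangS_bdsCarrier_iff, zeroExtension_replicate_false]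
  exact bot_mem_bdsCarrier g

lemma inLangS_bdsCarrier_replicate_false_append (n : ℕ) {w : List Bool}
    (hw : InLangS (bdsCarrier g) w) : InLangS (bdsCarrier g) (List.replicate n false ++ w) := by
  rw [inLangS_bdsCarrier_iff] at hw ⊢
  rw [zeroExtension_replicate_false_append]
  exact shiftBy_mem_bdsCarrier _ _ hw

lemma listHamming_replicate_false_le_of_inLangS {w : List Bool} (hw : InLangS (bdsCarrier g) w) :
    listHamming (List.replicate w.length false) w ≤ g w.length := by
  have hcount : w.countP (false ≠ ·) = w.count true := List.countP_congr (by simp)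
  rw [listHamming_replicate, hcount]
  exact count_true_le_of_inLangS_bdsCarrier hw

end BoundedDensity

theorem stmt15_general (g : ℕ → ℕ) (hg : Tendsto g atTop atTop) :
    (bdsCarrier g).Nonempty ∧
    IsClosed (bdsCarrier g) ∧
    (∀ x ∈ bdsCarrier g, shiftMap x ∈ bdsCarrier g) ∧
    (∀ u v : List Bool, InLangS (bdsCarrier g) u → InLangS (bdsCarrier g) v →
      ∃ z : List Bool, InLangS (bdsCarrier g) (u ++ z ++ v)) ∧
    (∀ w1 w2 : List Bool,
      InLangS (bdsCarrier g) w1 → InLangS (bdsCarrier g) w2 →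
      ∃ b : List Bool, b.length = w1.length ∧ InLangS (bdsCarrier g) b ∧
        listHamming b w1 ≤ g w1.length ∧ InLangS (bdsCarrier g) (b ++ w2)) := by
  refine ⟨⟨_, bot_mem_bdsCarrier g⟩, isClosed_bdsCarrier g, shiftBy_mem_bdsCarrier 1,
    fun u v => exists_inLangS_bdsCarrier_append hg, fun w1 w2 hw1 hw2 => ?_⟩
  exact ⟨List.replicate w1.length false, List.length_replicate,
    inLangS_bdsCarrier_replicate_false _, listHamming_replicate_false_le_of_inLangS hw1,
    inLangS_bdsCarrier_replicate_false_append _ hw2⟩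

/-- For `g` nondecreasing, unbounded, with `g(n)/n → 0`, the bounded density
shift is a nonempty subshift (closed and shift-invariant) that is irreducible and
has left almost specification with mistake function `g`. -/
theorem stmt15 (g : ℕ → ℕ) (hmono : Monotone g) (hunb : ∀ N : ℕ, ∃ n : ℕ, N ≤ g n)
    (hg : Filter.Tendsto (fun n : ℕ => (g n : ℝ) / (n : ℝ)) Filter.atTop (nhds 0)) :
    (bdsCarrier g).Nonempty ∧
    IsClosed (bdsCarrier g) ∧
    (∀ x ∈ bdsCarrier g, shiftMap x ∈ bdsCarrier g) ∧
    (∀ u v : List Bool, InLangS (bdsCarrier g) u → InLangS (bdsCarrier g) v →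
      ∃ z : List Bool, InLangS (bdsCarrier g) (u ++ z ++ v)) ∧
    (∀ w1 w2 : List Bool,
      InLangS (bdsCarrier g) w1 → InLangS (bdsCarrier g) w2 →
      ∃ b : List Bool, b.length = w1.length ∧ InLangS (bdsCarrier g) b ∧
        listHamming b w1 ≤ g w1.length ∧ InLangS (bdsCarrier g) (b ++ w2)) :=
  stmt15_general g (tendsto_atTop_atTop_of_monotone hmono hunb)
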